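/- For n ≥ 8, the height of Q(n) — the maximum cardinality of a chain (a subset totally ordered by ⪯_Q) in Q(n) — equals (n−2)(n−3)/2 + 1. -/

import Mathlib

open Finset

/-- Cumulative sum: `x 0 + ... + x k`. -/
def cum {n : ℕ} (x : Fin n → ℤ) (k : Fin n) : ℤ := ∑ i ∈ Finset.Iic k, x i

/-- The partial order `⪯`: every partial sum of `x` is at most that of `y`. -/
def ple {n : ℕ} (x y : Fin n → ℤ) : Prop := ∀ k : Fin n, cum x k ≤ cum y k

/-- Membership in `P(n)`: all entries are `1` or `-1`. -/
def isPM {n : ℕ} (v : Fin n → ℤ) : Prop := ∀ i, v i = 1 ∨ v i = -1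

/-- Membership in `Q(n)`. -/
def inQ {n : ℕ} (v : Fin n → ℤ) : Prop := isPM v ∧ ¬ ple v 0 ∧ ¬ ple 0 v

/-- Standard inner product on `ℤ^n`. -/
def dotp {n : ℕ} (x y : Fin n → ℤ) : ℤ := ∑ i, x i * y i

/-- The ±1 vector of a subset `S`. -/
def pS {n : ℕ} (S : Finset (Fin n)) : Fin n → ℤ := fun i => if i ∈ S then 1 else -1

/-- The vector `m_k`: first `k` entries 1, next `k+1` entries −1, rest 1 (0-indexed). -/
def mvec (n k : ℕ) : Fin n → ℤ := fun i => if i.val < k then 1 else if i.val < 2 * k + 1 then -1 else 1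

/-- An instance of the partition problem: `c_1 ≥ c_2 ≥ ⋯ ≥ c_n ≥ 0`. -/
def monoc {n : ℕ} (c : Fin n → ℤ) : Prop := (∀ i j : Fin n, i ≤ j → c j ≤ c i) ∧ ∀ i, 0 ≤ c i

/-- The sum of all partial sums of `v`. -/
def cumTotal {n : ℕ} (v : Fin n → ℤ) : ℤ := ∑ k, cum v k

theorem cum_zero {n : ℕ} (k : Fin n) : cum (0 : Fin n → ℤ) k = 0 := by
  simp [cum]

theorem cum_neg {n : ℕ} (v : Fin n → ℤ) (k : Fin n) : cum (-v) k = -cum v k := by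
  simp [cum]

theorem cumTotal_neg {n : ℕ} (v : Fin n → ℤ) : cumTotal (-v) = -cumTotal v := by
  simp [cumTotal, cum_neg]

theorem isPM.neg {n : ℕ} {v : Fin n → ℤ} (hv : isPM v) : isPM (-v) := by
  intro i
  rcases hv i with h | h <;> simp [h]

theorem cum_mk_zero {n : ℕ} (v : Fin n → ℤ) (h : 0 < n) : cum v ⟨0, h⟩ = v ⟨0, h⟩ := by
  have : Finset.Iic (⟨0, h⟩ : Fin n) = {⟨0, h⟩} := by
    ext x
    simp [Fin.le_def, Fin.ext_iff]
  simp [cum, this]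

theorem cum_mk_succ {n : ℕ} (v : Fin n → ℤ) (i : ℕ) (h : i + 1 < n) :
    cum v ⟨i + 1, h⟩ = cum v ⟨i, by omega⟩ + v ⟨i + 1, h⟩ := by
  have : Finset.Iic (⟨i + 1, h⟩ : Fin n) = insert ⟨i + 1, h⟩ (Finset.Iic ⟨i, by omega⟩) := by
    ext x
    simp only [Finset.mem_Iic, Finset.mem_insert, Fin.le_def, Fin.ext_iff]
    omega
  rw [cum, this, Finset.sum_insert (by simp [Fin.le_def]), cum, add_comm]

theorem eq_of_cum_eq {n : ℕ} {v w : Fin n → ℤ} (h : ∀ k, cum v k = cum w k) : v = w := by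
  funext ⟨i, hi⟩
  cases i with
  | zero => simpa [cum_mk_zero] using h ⟨0, hi⟩
  | succ i =>
    have h₁ := h ⟨i + 1, hi⟩
    rw [cum_mk_succ, cum_mk_succ, h ⟨i, by omega⟩] at h₁
    linarith

theorem ple.cumTotal_le {n : ℕ} {v w : Fin n → ℤ} (h : ple v w) : cumTotal v ≤ cumTotal w :=
  Finset.sum_le_sum fun k _ => h k

theorem ple.eq_of_cumTotal_eq {n : ℕ} {v w : Fin n → ℤ} (h : ple v w)
    (hT : cumTotal v = cumTotal w) : v = w :=
  eq_of_cum_eq fun k =>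
    (Finset.sum_eq_sum_iff_of_le fun k _ => h k).1 hT k (Finset.mem_univ k)

theorem ple.trans {n : ℕ} {u v w : Fin n → ℤ} (h : ple u v) (h' : ple v w) : ple u w :=
  fun k => (h k).trans (h' k)

theorem isPM.abs_cum_sub_le {n : ℕ} {v : Fin n → ℤ} (hv : isPM v) (i d : ℕ) (h : i + d < n) :
    |cum v ⟨i + d, h⟩ - cum v ⟨i, by omega⟩| ≤ d := by
  induction d with
  | zero => simp
  | succ d ih =>
    have ih := ih (by omega)
    have hs := cum_mk_succ v (i + d) h
    rw [abs_le] at *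
    simp only [← add_assoc]
    push_cast
    rcases hv ⟨i + d + 1, h⟩ with h1 | h1 <;> rw [hs, h1] <;> constructor <;> linarith

theorem isPM.abs_cum_le {n : ℕ} {v : Fin n → ℤ} (hv : isPM v) (i : ℕ) (h : i < n) :
    |cum v ⟨i, h⟩| ≤ i + 1 := by
  have h₁ := hv.abs_cum_sub_le 0 i (by omega)
  simp only [zero_add, cum_mk_zero] at h₁
  rw [abs_le] at *
  rcases hv ⟨0, by omega⟩ with h0 | h0 <;> rw [h0] at h₁ <;> constructor <;> linarith

theorem isPM.even_cum_sub {n : ℕ} {v w : Fin n → ℤ} (hv : isPM v) (hw : isPM w) (k : Fin n) :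
    2 ∣ cum v k - cum w k := by
  rw [cum, cum, ← Finset.sum_sub_distrib]
  refine Finset.dvd_sum fun i _ => ?_
  rcases hv i with h | h <;> rcases hw i with h' | h' <;> rw [h, h'] <;> norm_num

theorem isPM.even_cumTotal_sub {n : ℕ} {v w : Fin n → ℤ} (hv : isPM v) (hw : isPM w) :
    2 ∣ cumTotal v - cumTotal w := by
  rw [cumTotal, cumTotal, ← Finset.sum_sub_distrib]
  exact Finset.dvd_sum fun k _ => hv.even_cum_sub hw k

theorem isPM.cum_odd {n : ℕ} {v : Fin n → ℤ} (hv : isPM v) (i : ℕ) (h : i < n) :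
    2 ∣ cum v ⟨i, h⟩ - (i + 1) := by
  induction i with
  | zero => rcases hv ⟨0, h⟩ with h0 | h0 <;> simp [cum_mk_zero, h0]
  | succ i ih =>
    have ih := ih (by omega)
    have hs := cum_mk_succ v i h
    rcases hv ⟨i + 1, h⟩ with h1 | h1 <;> rw [hs, h1] <;> push_cast <;> omega

theorem isPM.exists_cum_pos {n : ℕ} {v : Fin n → ℤ} (hv : isPM v) (h : ¬ ple v 0) :
    ∃ (j : ℕ) (hj : 2 * j < n), 1 ≤ cum v ⟨2 * j, hj⟩ := by
  simp only [ple, not_forall, not_le] at h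
  obtain ⟨⟨k, hk⟩, h⟩ := h
  rw [cum_zero] at h
  rcases Nat.even_or_odd' k with ⟨j, rfl | rfl⟩
  · exact ⟨j, hk, h⟩
  · refine ⟨j, by omega, ?_⟩
    have hp := hv.cum_odd _ hk
    have hs := cum_mk_succ v (2 * j) hk
    rcases hv ⟨2 * j + 1, hk⟩ with h1 | h1 <;> rw [h1] at hs <;> push_cast at hp <;> omega

/-- The partial sums of the vector with `j` entries `-1`, then `j + 1` entries `1`, and `-1`
afterwards. -/
def dipBound (j i : ℕ) : ℤ :=
  if i < j then -(i + 1) else if i ≤ 2 * j then 1 - (2 * j - i) else 1 - (i - 2 * j)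

theorem isPM.dipBound_le_cum {n : ℕ} {v : Fin n → ℤ} (hv : isPM v) {j : ℕ} (hj : 2 * j < n)
    (h : 1 ≤ cum v ⟨2 * j, hj⟩) (i : ℕ) (hi : i < n) : dipBound j i ≤ cum v ⟨i, hi⟩ := by
  unfold dipBound
  split_ifs with h1 h2
  · exact (abs_le.1 (hv.abs_cum_le i hi)).1.trans' (by simp)
  · obtain ⟨d, hd⟩ := Nat.exists_eq_add_of_le h2
    have := (abs_le.1 (hv.abs_cum_sub_le i d (by omega))).2
    simp only [← hd] at this
    zify at hd
    linarith
  · obtain ⟨d, rfl⟩ := Nat.exists_eq_add_of_le (not_le.1 h2).le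
    have := (abs_le.1 (hv.abs_cum_sub_le (2 * j) d hi)).1
    push_cast
    linarith

theorem two_mul_sum_dipBound (j n : ℕ) :
    2 * ∑ i ∈ Finset.range n, dipBound j i =
      if n ≤ j then -((n : ℤ) * (n + 1))
      else if n ≤ 2 * j + 1 then (n : ℤ) * (n + 1) - 4 * j * n + 2 * j * (j - 1)
      else 2 * (j + 1) * (2 * n - 3 * j) - (n : ℤ) * (n + 1) := by
  induction n with
  | zero => simp
  | succ n ih =>
    rw [Finset.sum_range_succ, mul_add, ih]
    unfold dipBound
    rcases lt_trichotomy n j with h | rfl | h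
    · simp only [h, h.le, Nat.succ_le_of_lt h, if_true]
      push_cast
      ring
    · have : n ≤ 2 * n := by omega
      have : ¬ n + 1 ≤ n := by omega
      have : n + 1 ≤ 2 * n + 1 := by omega
      simp only [*, le_refl, lt_irrefl, if_true, if_false]
      push_cast
      ring
    · have : ¬ n ≤ j := by omega
      have : ¬ n < j := by omega
      have : ¬ n + 1 ≤ j := by omega
      rcases lt_trichotomy n (2 * j + 1) with h' | rfl | h'
      · have : n ≤ 2 * j := by omega
        have : n + 1 ≤ 2 * j + 1 := by omega
        simp only [*, h'.le, if_true, if_false]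
        push_cast
        ring
      · have : ¬ 2 * j + 1 ≤ 2 * j := by omega
        have : ¬ 2 * j + 1 + 1 ≤ 2 * j + 1 := by omega
        simp only [*, le_refl, if_true, if_false]
        push_cast
        ring
      · have : ¬ n ≤ 2 * j := by omega
        have : ¬ n ≤ 2 * j + 1 := by omega
        have : ¬ n + 1 ≤ 2 * j + 1 := by omega
        simp only [*, if_false]
        push_cast
        ring

theorem two_mul_sum_dipBound_of_lt {j n : ℕ} (h : 2 * j < n) :
    2 * ∑ i ∈ Finset.range n, dipBound j i =
      2 * (j + 1) * (2 * n - 3 * j) - (n : ℤ) * (n + 1) := by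
  rw [two_mul_sum_dipBound, if_neg (by omega)]
  split_ifs with h'
  · obtain rfl : n = 2 * j + 1 := by omega
    push_cast
    ring
  · rfl

theorem isPM.le_cumTotal {n : ℕ} {v : Fin n → ℤ} (hv : isPM v) {j : ℕ} (hj : 2 * j < n)
    (h : 1 ≤ cum v ⟨2 * j, hj⟩) :
    2 * (j + 1) * (2 * n - 3 * j) - (n : ℤ) * (n + 1) ≤ 2 * cumTotal v := by
  rw [← two_mul_sum_dipBound_of_lt hj, Finset.sum_range, cumTotal]
  exact mul_le_mul_of_nonneg_left
    (Finset.sum_le_sum fun i _ => hv.dipBound_le_cum hj h i i.2) (by norm_num)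

theorem four_mul_sub_six_le {n j : ℕ} (hn : 8 ≤ n) (hj : 2 * j < n) (hj1 : 1 ≤ j) :
    (4 * n - 6 : ℤ) ≤ (j + 1) * (2 * n - 3 * j) := by
  have h1 : (0 : ℤ) ≤ j - 1 := by omega
  have h2 : (0 : ℤ) ≤ 2 * n - 3 * j - 6 := by omega
  nlinarith [mul_nonneg h1 h2]

theorem cumTotal_sub_le {n : ℕ} (hn : 8 ≤ n) {v w : Fin n → ℤ} (hv : inQ v) (hw : inQ w)
    (h : ple v w) : cumTotal w - cumTotal v ≤ ((n : ℤ) - 2) * (n - 3) := by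
  obtain ⟨j, hj, hvj⟩ := hv.1.exists_cum_pos hv.2.1
  have hw' : ¬ ple (-w) 0 := by
    intro h'
    refine hw.2.2 fun k => ?_
    have := h' k
    rw [cum_neg, cum_zero] at this
    rw [cum_zero]
    linarith
  obtain ⟨k, hk, hwk⟩ := hw.1.neg.exists_cum_pos hw'
  have hjk : j ≠ k := by
    rintro rfl
    have := h ⟨2 * j, hj⟩
    rw [cum_neg] at hwk
    linarith
  have hTv := hv.1.le_cumTotal hj hvj
  have hTw := hw.1.neg.le_cumTotal hk hwk
  rw [cumTotal_neg] at hTw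
  rcases Nat.eq_zero_or_pos j with rfl | hj0
  · have := four_mul_sub_six_le hn hk (by omega)
    push_cast at hTv
    nlinarith
  · have h1 := four_mul_sub_six_le hn hj hj0
    rcases Nat.eq_zero_or_pos k with rfl | hk0
    · push_cast at hTw
      nlinarith
    · have h2 := four_mul_sub_six_le hn hk hk0
      have : (8 : ℤ) ≤ n := by exact_mod_cast hn
      nlinarith

theorem card_le_of_isChain {n N : ℕ} {A : Finset (Fin n → ℤ)} (hPM : ∀ v ∈ A, isPM v)
    (hA : IsChain ple (A : Set (Fin n → ℤ)))
    (hN : ∀ v ∈ A, ∀ w ∈ A, ple v w → cumTotal w - cumTotal v ≤ 2 * N) : A.card ≤ N + 1 := by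
  rcases A.eq_empty_or_nonempty with rfl | hne
  · simp
  obtain ⟨a, ha, hmin⟩ := A.exists_min_image cumTotal hne
  have hple : ∀ v ∈ A, ple a v := by
    intro v hv
    rcases eq_or_ne a v with rfl | hav
    · exact fun _ => le_rfl
    rcases hA ha hv hav with h | h
    · exact h
    · exact absurd (h.eq_of_cumTotal_eq (le_antisymm h.cumTotal_le (hmin v hv))).symm hav
  rw [← Finset.card_range (N + 1)]
  refine Finset.card_le_card_of_injOn (fun v => ((cumTotal v - cumTotal a) / 2).toNat) ?_ ?_
  · intro v hv
    have := hN a ha v hv (hple v hv)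
    simp only [Finset.coe_range, Set.mem_Iio]
    omega
  · intro v hv w hw hvw
    have h1 := (hPM v hv).even_cumTotal_sub (hPM a ha)
    have h2 := (hPM w hw).even_cumTotal_sub (hPM a ha)
    have h3 := hmin v hv
    have h4 := hmin w hw
    have hT : cumTotal v = cumTotal w := by
      simp only at hvw
      omega
    by_contra hne
    rcases hA hv hw hne with h | h
    · exact hne (h.eq_of_cumTotal_eq hT)
    · exact hne (h.eq_of_cumTotal_eq hT.symm).symm

/-- The `±1` vectors starting with `1, -1, -1`. -/
def startsPMM {n : ℕ} (v : Fin n → ℤ) : Prop :=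
  isPM v ∧ ∀ i : Fin n, i.val < 3 → v i = if i.val = 0 then 1 else -1

theorem startsPMM.inQ {n : ℕ} (hn : 3 ≤ n) {v : Fin n → ℤ} (hv : startsPMM v) : inQ v := by
  have h0 : cum v ⟨0, by omega⟩ = 1 := by rw [cum_mk_zero, hv.2 _ (by simp)]; simp
  have h2 : cum v ⟨2, by omega⟩ = -1 := by
    rw [cum_mk_succ v 1, cum_mk_succ v 0, h0, hv.2 _ (by simp), hv.2 _ (by simp)]; simp
  refine ⟨hv.1, fun h => ?_, fun h => ?_⟩
  · have := h ⟨0, by omega⟩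
    simp [h0, cum_zero] at this
  · have := h ⟨2, by omega⟩
    simp [h2, cum_zero] at this

theorem startsPMM.exists_cover {n : ℕ} {v : Fin n → ℤ} (hv : startsPMM v)
    (h : ∃ i : Fin n, 3 ≤ i.val ∧ v i = -1) :
    ∃ w, startsPMM w ∧ ple v w ∧ cumTotal w = cumTotal v + 2 := by
  classical
  obtain ⟨i, hi, hmax⟩ := (Finset.univ.filter fun i : Fin n => 3 ≤ i.val ∧ v i = -1).exists_max_image
    id (by simpa [Finset.Nonempty] using h)
  simp only [Finset.mem_filter, Finset.mem_univ, true_and, id] at hi hmax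
  have hnext : ∀ k : Fin n, k.val = i.val + 1 → v k = 1 := by
    intro k hk
    refine (hv.1 k).resolve_right fun h' => ?_
    have := hmax k ⟨by omega, h'⟩
    rw [Fin.le_def] at this
    omega
  let w : Fin n → ℤ := fun k => if k = i then 1 else if k.val = i.val + 1 then -1 else v k
  have hcum : ∀ (k : ℕ) (hk : k < n),
      cum w ⟨k, hk⟩ = cum v ⟨k, hk⟩ + if k = i.val then 2 else 0 := by
    intro k hk
    induction k with
    | zero =>
      have : ¬ 0 = i.val := by omega
      simp [cum_mk_zero, w, Fin.ext_iff, this]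
    | succ k ih =>
      rw [cum_mk_succ, cum_mk_succ, ih (by omega)]
      have hvi := hi.2
      have hnk := hnext ⟨k + 1, hk⟩
      simp only [w, Fin.ext_iff] at *
      by_cases h1 : k + 1 = i.val
      · have : k ≠ i.val := by omega
        have h2 : v ⟨k + 1, hk⟩ = -1 := by rw [← hvi]; congr 1; exact Fin.ext h1
        simp [h1, this] at h2 ⊢
        linarith
      · by_cases h2 : k = i.val
        · have h3 := hnk (by omega)
          simp only [h2, if_true] at h3 ⊢
          simp only [h3]
          simp
          ring
        · simp [h1, h2]
  refine ⟨w, ⟨fun k => ?_, fun k hk => ?_⟩, fun k => ?_, ?_⟩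
  · simp only [w]
    split_ifs
    · simp
    · simp
    · exact hv.1 k
  · rw [← hv.2 k hk]
    have h1 : k ≠ i := by rintro rfl; omega
    have h2 : k.val ≠ i.val + 1 := by omega
    simp [w, h1, h2]
  · have := hcum k k.2
    simp only [Fin.eta] at this
    rw [this]
    split_ifs <;> simp
  · have : ∀ k : Fin n, cum w k = cum v k + if k = i then 2 else 0 := by
      intro k
      simpa [Fin.ext_iff] using hcum k k.2
    simp [cumTotal, this, Finset.sum_add_distrib]

theorem two_mul_cumTotal_of_forall_neg {n : ℕ} (hn : 3 ≤ n) {v : Fin n → ℤ} (hv : startsPMM v)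
    (h : ∀ i : Fin n, 3 ≤ i.val → v i = -1) :
    2 * cumTotal v = 4 * n - (n : ℤ) * (n + 1) := by
  have hcum : ∀ (i : ℕ) (hi : i < n), cum v ⟨i, hi⟩ = dipBound 0 i := by
    intro i hi
    induction i with
    | zero => rw [cum_mk_zero, hv.2 _ (by simp)]; simp [dipBound]
    | succ i ih =>
      have hvi : v ⟨i + 1, hi⟩ = -1 := by
        by_cases h3 : i + 1 < 3
        · rw [hv.2 _ h3]; simp
        · exact h _ (by simpa using h3)
      rw [cum_mk_succ, ih (by omega), hvi]
      rcases i with _ | i <;> simp [dipBound]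
      ring
  have := two_mul_sum_dipBound_of_lt (j := 0) (n := n) (by omega)
  rw [Finset.sum_range] at this
  rw [cumTotal, Finset.sum_congr rfl fun (i : Fin n) _ => hcum i i.2, this]
  push_cast
  ring

theorem two_mul_cumTotal_of_forall_pos {n : ℕ} (hn : 3 ≤ n) {v : Fin n → ℤ} (hv : startsPMM v)
    (h : ∀ i : Fin n, 3 ≤ i.val → v i = 1) :
    2 * cumTotal v = (n : ℤ) * (n + 1) - 4 * (2 * n - 3) := by
  have hcum : ∀ (i : ℕ) (hi : i < n), cum v ⟨i, hi⟩ = -dipBound 1 i := by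
    intro i hi
    induction i with
    | zero => rw [cum_mk_zero, hv.2 _ (by simp)]; simp [dipBound]
    | succ i ih =>
      rw [cum_mk_succ, ih (by omega)]
      rcases i with _ | _ | i
      · rw [hv.2 _ (by simp)]; simp [dipBound]
      · rw [hv.2 _ (by simp)]; simp [dipBound]
      · rw [h _ (by simp)]
        rcases i with _ | i
        · simp [dipBound]
        · simp [dipBound]
          ring
  have := two_mul_sum_dipBound_of_lt (j := 1) (n := n) (by omega)
  rw [Finset.sum_range] at this
  rw [cumTotal, Finset.sum_congr rfl fun (i : Fin n) _ => hcum i i.2, Finset.sum_neg_distrib, mul_neg, this]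
  push_cast
  ring

theorem exists_chain_startsPMM {n : ℕ} (hn : 3 ≤ n) (t : ℕ)
    (ht : (2 * t : ℤ) ≤ ((n : ℤ) - 2) * (n - 3)) :
    ∃ (A : Finset (Fin n → ℤ)) (w : Fin n → ℤ), (∀ v ∈ A, startsPMM v ∧ ple v w) ∧ w ∈ A ∧
      IsChain ple (A : Set (Fin n → ℤ)) ∧ A.card = t + 1 ∧
      2 * cumTotal w = 4 * n - (n : ℤ) * (n + 1) + 4 * t := by
  classical
  induction t with
  | zero =>
    let u : Fin n → ℤ := fun i => if i.val = 0 then 1 else -1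
    have hu : startsPMM u :=
      ⟨fun i => by simp only [u]; split_ifs <;> simp, fun i _ => rfl⟩
    refine ⟨{u}, u, ?_, by simp, by simp, by simp, ?_⟩
    · simp only [Finset.mem_singleton, forall_eq]
      exact ⟨hu, fun _ => le_rfl⟩
    · rw [two_mul_cumTotal_of_forall_neg hn hu fun i hi => if_neg (by omega)]
      simp
  | succ t ih =>
    push_cast at ht
    obtain ⟨A, w, hA, hwA, hchain, hcard, hT⟩ := ih (by linarith)
    have hex : ∃ i : Fin n, 3 ≤ i.val ∧ w i = -1 := by
      by_contra! hcon
      have := two_mul_cumTotal_of_forall_pos hn (hA w hwA).1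
        fun i hi => ((hA w hwA).1.1 i).resolve_right (hcon i hi)
      nlinarith
    obtain ⟨x, hx, hwx, hTx⟩ := (hA w hwA).1.exists_cover hex
    have hle : ∀ v ∈ A, ple v x := fun v hv => (hA v hv).2.trans hwx
    have hxA : x ∉ A := fun h => by
      have := (hA x h).2.cumTotal_le
      linarith
    refine ⟨insert x A, x, ?_, by simp, ?_, ?_, ?_⟩
    · intro v hv
      rcases Finset.mem_insert.1 hv with rfl | hv
      · exact ⟨hx, fun _ => le_rfl⟩
      · exact ⟨(hA v hv).1, hle v hv⟩
    · rw [Finset.coe_insert]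
      exact hchain.insert fun v hv _ => Or.inr (hle v hv)
    · rw [Finset.card_insert_of_notMem hxA, hcard]
    · rw [hTx]
      push_cast
      linarith

theorem stmt10 {n : ℕ} (hn : 8 ≤ n) :
    IsGreatest {k | ∃ A : Finset (Fin n → ℤ),
        (∀ v ∈ A, inQ v) ∧ IsChain ple (A : Set (Fin n → ℤ)) ∧ A.card = k}
      ((n - 2) * (n - 3) / 2 + 1) := by
  have hN : (2 * ((n - 2) * (n - 3) / 2 : ℕ) : ℤ) = ((n : ℤ) - 2) * (n - 3) := by
    obtain ⟨m, rfl⟩ := Nat.exists_eq_add_of_le' (show 3 ≤ n by omega)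
    have h := Nat.two_mul_div_two_of_even (Nat.even_mul_succ_self m)
    have e : (m + 3 - 2) * (m + 3 - 3) = m * (m + 1) := by
      rw [show m + 3 - 2 = m + 1 by omega, Nat.add_sub_cancel, mul_comm]
    rw [e]
    zify at h
    push_cast
    rw [h]
    ring
  constructor
  · obtain ⟨A, w, hA, -, hchain, hcard, -⟩ :=
      exists_chain_startsPMM (n := n) (by omega) _ hN.le
    exact ⟨A, fun v hv => (hA v hv).1.inQ (by omega), hchain, hcard⟩
  · rintro k ⟨A, hA, hchain, rfl⟩
    refine card_le_of_isChain (fun v hv => (hA v hv).1) hchain fun v hv w hw h => ?_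
    rw [hN]
    exact cumTotal_sub_le hn (hA v hv) (hA w hw) h
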